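/- For a generalised multi-clause-set F the following conditions are equivalent: (i) F is matching lean; (ii) for every clause-occurrence C ∈ F one has δ*(F − {C}) < δ*(F); (iii) for every proper sub-multiset F' of F one has δ(F') < δ(F); (iv) F is a tight sub-multiset of itself and there is no other tight sub-multiset of F. -/

import Mathlib

open scoped Classical

namespace GCLS

variable {V α : Type} [DecidableEq V] [DecidableEq α]

/-- A finite "functional" set of (variable, value) pairs, with values inside the
given domains `D`; used both for clauses and for partial assignments. -/
def FinFn (D : V → Finset α) : Type :=
  { s : Finset (V × α) // (∀ p ∈ s, p.2 ∈ D p.1) ∧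
      ∀ p ∈ s, ∀ q ∈ s, p.1 = q.1 → p = q }

variable {D : V → Finset α}

instance : DecidableEq (FinFn D) :=
  fun a b => decidable_of_iff (a.1 = b.1) Subtype.ext_iff.symm

namespace FinFn

/-- The set of variables occurring. -/
def vars (s : FinFn D) : Finset V := s.1.image Prod.fst

/-- Restriction to the pairs whose variable lies in `W`. -/
def restrictVars (s : FinFn D) (W : Finset V) : FinFn D :=
  ⟨s.1.filter (fun p => p.1 ∈ W),
   fun p hp => s.2.1 p (Finset.mem_filter.mp hp).1,
   fun p hp q hq h =>
     s.2.2 p (Finset.mem_filter.mp hp).1 q (Finset.mem_filter.mp hq).1 h⟩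

/-- Removal of a set of pairs. -/
def sdiff (s : FinFn D) (t : Finset (V × α)) : FinFn D :=
  ⟨s.1 \ t,
   fun p hp => s.2.1 p (Finset.mem_sdiff.mp hp).1,
   fun p hp q hq h =>
     s.2.2 p (Finset.mem_sdiff.mp hp).1 q (Finset.mem_sdiff.mp hq).1 h⟩

end FinFn

/-- Clauses: finite sets of literals `(v,ε)` (meaning "v ≠ ε"), at most one literal
per variable, values inside the domains. -/
abbrev Clause (D : V → Finset α) := FinFn D

/-- Partial assignments: finitely many variables get values inside their domains. -/
abbrev PAssign (D : V → Finset α) := FinFn D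

/-- `φ` satisfies the literal `(v,ε)` (i.e. "v ≠ ε"): `v` is assigned a value ≠ `ε`. -/
def SatLit (φ : PAssign D) (l : V × α) : Prop :=
  ∃ ε, (l.1, ε) ∈ φ.1 ∧ ε ≠ l.2

/-- `φ` satisfies a clause iff it satisfies some literal of it. -/
def SatClause (φ : PAssign D) (C : Clause D) : Prop :=
  ∃ l ∈ C.1, SatLit φ l

/-- The clause obtained from `C` by deleting all literals falsified by `φ`. -/
def Clause.restrict (φ : PAssign D) (C : Clause D) : Clause D :=
  FinFn.sdiff C φ.1

/-- The operation `φ * F` on multi-clause-sets: remove all clauses satisfied by `φ`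
and delete all falsified literals from the remaining clauses. -/
noncomputable def applyM (φ : PAssign D) (F : Multiset (Clause D)) : Multiset (Clause D) :=
  (F.filter (fun C => ¬ SatClause φ C)).map (Clause.restrict φ)

/-- The operation `φ * F` on clause-sets (with contraction of equal clauses). -/
noncomputable def applyF (φ : PAssign D) (F : Finset (Clause D)) : Finset (Clause D) :=
  (F.filter (fun C => ¬ SatClause φ C)).image (Clause.restrict φ)

/-- Satisfiability: some partial assignment satisfies all clauses. -/
def Sat (F : Multiset (Clause D)) : Prop :=
  ∃ φ : PAssign D, applyM φ F = 0

/-- Minimal unsatisfiability of a clause-set. -/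
def MinUnsat (F : Finset (Clause D)) : Prop :=
  ¬ Sat F.val ∧ ∀ F' ⊂ F, Sat F'.val

/-- The variables of a multi-clause-set. -/
def mvars (F : Multiset (Clause D)) : Finset V := F.toFinset.sup FinFn.vars

/-- The deficiency `δ(F) = c(F) - Σ_{v ∈ var(F)} (|D_v| - 1)`. -/
def delta (F : Multiset (Clause D)) : ℤ :=
  (Multiset.card F : ℤ) - ∑ v ∈ mvars F, ((D v).card - 1 : ℤ)

lemma powerset_toFinset_nonempty (F : Multiset (Clause D)) :
    F.powerset.toFinset.Nonempty :=
  ⟨0, by simp⟩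

/-- The maximal deficiency `δ*(F) = max {δ(F') : F' ≤ F}`. -/
noncomputable def deltaStar (F : Multiset (Clause D)) : ℤ :=
  F.powerset.toFinset.sup' (powerset_toFinset_nonempty F) delta

/-- A tight sub-multi-clause-set: `F' ≤ F` with `δ(F') = δ*(F)`. -/
noncomputable def Tight (F F' : Multiset (Clause D)) : Prop :=
  F' ≤ F ∧ delta F' = deltaStar F

/-- `F` is matching satisfiable: the clause-variable graph `B(F)` has a matching
covering all clause-nodes.  Such a matching is encoded as a multiset `P` of pairs
(clause-occurrence, variable-node), where the variable-nodes `(v,k)`,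
`k < |D v| - 1`, are the copies of the variable `v`; the matching covers each
clause-occurrence exactly once (`P.map Prod.fst = F`), uses pairwise distinct
variable-nodes, and respects adjacency in `B(F)`. -/
def MatchingSat (F : Multiset (Clause D)) : Prop :=
  ∃ P : Multiset (Clause D × (V × ℕ)),
    P.map Prod.fst = F ∧ (P.map Prod.snd).Nodup ∧
    ∀ p ∈ P, p.2.1 ∈ FinFn.vars p.1 ∧ p.2.2 < (D p.2.1).card - 1

/-- The edge between clause `C` and the copies of variable `v` is retained in
`B_φ(F)`: the literal of `C` with variable `v` is satisfied by `φ`. -/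
def EdgeSat (φ : PAssign D) (C : Clause D) (v : V) : Prop :=
  ∃ ε, (v, ε) ∈ C.1 ∧ SatLit φ (v, ε)

/-- `φ` is matching-satisfying for `F`: `B_φ(F)` has a matching covering all
clause-nodes. -/
def MatchingSatisfying (φ : PAssign D) (F : Multiset (Clause D)) : Prop :=
  ∃ P : Multiset (Clause D × (V × ℕ)),
    P.map Prod.fst = F ∧ (P.map Prod.snd).Nodup ∧
    ∀ p ∈ P, p.2.2 < (D p.2.1).card - 1 ∧ EdgeSat φ p.1 p.2.1

/-- The maximum size of a matching in `B(F)`. -/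
noncomputable def nu (F : Multiset (Clause D)) : ℕ :=
  sSup { k | ∃ P : Multiset (Clause D × (V × ℕ)),
    P.map Prod.fst ≤ F ∧ (P.map Prod.snd).Nodup ∧
    (∀ p ∈ P, p.2.1 ∈ FinFn.vars p.1 ∧ p.2.2 < (D p.2.1).card - 1) ∧
    Multiset.card P = k }

/-- The maximum size of a matching in `B_φ(F)`. -/
noncomputable def nuSub (φ : PAssign D) (F : Multiset (Clause D)) : ℕ :=
  sSup { k | ∃ P : Multiset (Clause D × (V × ℕ)),
    P.map Prod.fst ≤ F ∧ (P.map Prod.snd).Nodup ∧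
    (∀ p ∈ P, p.2.2 < (D p.2.1).card - 1 ∧ EdgeSat φ p.1 p.2.1) ∧
    Multiset.card P = k }

/-- `φ` is matching-maximum for `F`. -/
noncomputable def MatchingMaximum (φ : PAssign D) (F : Multiset (Clause D)) : Prop :=
  nuSub φ F = nu F

/-- `φ` is an autarky for `F`: every clause touched by `φ` is satisfied by `φ`. -/
def IsAutarky (φ : PAssign D) (F : Multiset (Clause D)) : Prop :=
  ∀ C ∈ F, (FinFn.vars C ∩ FinFn.vars φ).Nonempty → SatClause φ C

/-- `F` is lean: it has no non-trivial autarky. -/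
def IsLean (F : Multiset (Clause D)) : Prop :=
  ¬ ∃ φ : PAssign D, IsAutarky φ F ∧ (FinFn.vars φ ∩ mvars F).Nonempty

/-- The sub-multi-clause-set of clauses touched by the variables in `W`. -/
noncomputable def touchedBy (F : Multiset (Clause D)) (W : Finset V) : Multiset (Clause D) :=
  F.filter (fun C => (FinFn.vars C ∩ W).Nonempty)

/-- The restriction `F[W]`: keep the clauses touching `W` and delete from them all
literals whose variable is not in `W`. -/
noncomputable def restrictTo (F : Multiset (Clause D)) (W : Finset V) : Multiset (Clause D) :=
  (touchedBy F W).map (fun C => FinFn.restrictVars C W)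

/-- `φ` is a matching autarky for `F`: `φ` is matching-satisfying for the
sub-multi-clause-set of clauses touched by `φ`. -/
noncomputable def IsMatchingAutarky (φ : PAssign D) (F : Multiset (Clause D)) : Prop :=
  MatchingSatisfying φ (touchedBy F (FinFn.vars φ))

/-- `F` is matching lean: no non-trivial matching autarky. -/
noncomputable def MatchingLean (F : Multiset (Clause D)) : Prop :=
  ¬ ∃ φ : PAssign D, IsMatchingAutarky φ F ∧ (FinFn.vars φ ∩ mvars F).Nonempty

lemma surp_nonempty {F : Multiset (Clause D)} (h : (mvars F).Nonempty) :
    ((mvars F).powerset.erase ∅).Nonempty := by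
  obtain ⟨v, hv⟩ := h
  refine ⟨{v}, ?_⟩
  simp [Finset.mem_erase, Finset.singleton_subset_iff, hv]

/-- The surplus `surp(F) = min {δ(F[W]) : ∅ ≠ W ⊆ var(F)}` (and `0` if `var(F) = ∅`). -/
noncomputable def surp (F : Multiset (Clause D)) : ℤ :=
  if h : (mvars F).Nonempty then
    ((mvars F).powerset.erase ∅).inf' (surp_nonempty h)
      (fun W => delta (restrictTo F W))
  else 0

/-- The number of occurrences of the literal `l` in `F`. -/
noncomputable def litCount (F : Multiset (Clause D)) (l : V × α) : ℕ :=
  Multiset.card (F.filter (fun C => l ∈ C.1))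

/-- The number of occurrences `#_v(F)` of the variable `v` in `F`. -/
noncomputable def varCount (F : Multiset (Clause D)) (v : V) : ℕ :=
  ∑ ε ∈ D v, litCount F (v, ε)

/-- The partial assignment `⟨v → ε⟩`. -/
def single (v : V) (ε : α) (hε : ε ∈ D v) : PAssign D :=
  ⟨{(v, ε)}, by
    refine ⟨?_, ?_⟩
    · intro p hp
      rw [Finset.mem_singleton] at hp
      subst hp; exact hε
    · intro p hp q hq _
      rw [Finset.mem_singleton] at hp hq
      subst hp; subst hq; rfl⟩

/-- Composition `φ ∘ ψ` of partial assignments: domain is the union of the domains,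
`ψ` taking precedence. -/
def comp (φ ψ : PAssign D) : PAssign D :=
  ⟨ψ.1 ∪ φ.1.filter (fun p => p.1 ∉ FinFn.vars ψ), by
    constructor
    · intro p hp
      rcases Finset.mem_union.mp hp with h | h
      · exact ψ.2.1 p h
      · exact φ.2.1 p (Finset.mem_filter.mp h).1
    · intro p hp q hq hpq
      rcases Finset.mem_union.mp hp with h1 | h1 <;>
        rcases Finset.mem_union.mp hq with h2 | h2
      · exact ψ.2.2 p h1 q h2 hpq
      · exact absurd (hpq ▸ Finset.mem_image_of_mem Prod.fst h1)
          (Finset.mem_filter.mp h2).2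
      · exact absurd (hpq.symm ▸ Finset.mem_image_of_mem Prod.fst h2)
          (Finset.mem_filter.mp h1).2
      · exact φ.2.2 p (Finset.mem_filter.mp h1).1 q (Finset.mem_filter.mp h2).1 hpq⟩

/-- Two clauses clash (in some variable). -/
def Clash (C C' : Clause D) : Prop :=
  ∃ v ε ε', (v, ε) ∈ C.1 ∧ (v, ε') ∈ C'.1 ∧ ε ≠ ε'

/-- The number of variables in which two clauses clash. -/
noncomputable def clashCount (C C' : Clause D) : ℕ :=
  ((FinFn.vars C).filter
    (fun v => ∃ ε ε', (v, ε) ∈ C.1 ∧ (v, ε') ∈ C'.1 ∧ ε ≠ ε')).card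

/-- Hitting clause-sets: every two distinct clauses clash. -/
def Hitting (F : Finset (Clause D)) : Prop :=
  ∀ C ∈ F, ∀ C' ∈ F, C ≠ C' → Clash C C'

/-- Boolean clauses over the boolean variables `V × α` (one boolean variable per
generalised literal; the value `false` gives the positive boolean literal). -/
abbrev BClause (V α : Type) :=
  Clause (fun _ : V × α => (Finset.univ : Finset Bool))

/-- The direct translation of a single clause: each literal `(v,ε)` is replaced by
the positive boolean literal of the boolean variable `(v,ε)`. -/
def dirClause (C : Clause D) : BClause V α :=
  ⟨C.1.image (fun p => (p, false)), by
    constructor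
    · intro p _; exact Finset.mem_univ _
    · intro p hp q hq h
      simp only [Finset.mem_image] at hp hq
      obtain ⟨a, -, rfl⟩ := hp
      obtain ⟨b, -, rfl⟩ := hq
      exact congrArg (fun x => (x, false)) h⟩

/-- The ALO-clause for a variable `v`: the negative boolean literals of the boolean
variables `(v,ε)` for `ε ∈ D v`. -/
def aloClause (D : V → Finset α) (v : V) : BClause V α :=
  ⟨(D v).image (fun ε => ((v, ε), true)), by
    constructor
    · intro p _; exact Finset.mem_univ _
    · intro p hp q hq h
      simp only [Finset.mem_image] at hp hq
      obtain ⟨a, -, rfl⟩ := hp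
      obtain ⟨b, -, rfl⟩ := hq
      exact congrArg (fun x => (x, true)) h⟩

/-- The direct translation `Γ(F)`: the translated clauses together with the
ALO-clauses for all occurring variables. -/
noncomputable def dirTrans (F : Finset (Clause D)) : Finset (BClause V α) :=
  F.image dirClause ∪ (mvars F.val).image (aloClause D)

/-!
Split `F = G + R`. Passing from `G` to `F` adds `|R|` clauses and the copies of the variables in
`var(R) \ var(G)`, so `δ(F) ≤ δ(G)` says that there are at least as many of these copies as
clauses of `R`. A matching of all of `R` into these copies forces this inequality; conversely, if
`G` is tight, the inequality for the pairs `G ≤ G + H` with `H ≤ R` is exactly Hall's condition,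
so such a matching exists.

These matchings are the matching autarkies: at most `|D v| - 1` clauses are matched to copies of
`v`, so some value of `v` satisfies the `v`-literals of all of them. Hence `F` is matching lean
iff no proper sub-multiset of `F` is tight.
-/

namespace FinFn

omit [DecidableEq α] in
lemma mem_vars {s : FinFn D} {v : V} : v ∈ s.vars ↔ ∃ ε, (v, ε) ∈ s.1 := by
  simp [vars]

omit [DecidableEq α] in
lemma domain_nonempty_of_mem_vars {s : FinFn D} {v : V} (hv : v ∈ s.vars) : (D v).Nonempty := by
  obtain ⟨ε, hε⟩ := mem_vars.mp hv
  exact ⟨ε, s.2.1 _ hε⟩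

/-- The partial function given by `e` on the finite set of variables `W`. -/
def ofFun (W : Finset V) (e : W → α) (he : ∀ v : W, e v ∈ D v) : FinFn D :=
  ⟨Finset.univ.image fun v => (v.1, e v), by
    simp only [Finset.mem_image, Finset.mem_univ, true_and]
    constructor
    · rintro _ ⟨v, rfl⟩
      exact he v
    · rintro _ ⟨v, rfl⟩ _ ⟨w, rfl⟩ hvw
      rw [Subtype.ext hvw]⟩

lemma mem_ofFun {W : Finset V} {e : W → α} (he : ∀ v : W, e v ∈ D v) (v : W) :
    (v.1, e v) ∈ (ofFun W e he).1 :=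
  Finset.mem_image_of_mem _ (Finset.mem_univ v)

lemma vars_ofFun {W : Finset V} {e : W → α} (he : ∀ v : W, e v ∈ D v) :
    (ofFun W e he).vars = W := by
  ext v
  simp [vars, ofFun]

end FinFn

lemma mem_mvars {F : Multiset (Clause D)} {v : V} : v ∈ mvars F ↔ ∃ C ∈ F, v ∈ C.vars := by
  simp [mvars, Finset.mem_sup]

lemma mvars_add (G H : Multiset (Clause D)) : mvars (G + H) = mvars G ∪ mvars H := by
  simp only [mvars, Multiset.toFinset_add, Finset.sup_union, Finset.sup_eq_union]

lemma domain_nonempty_of_mem_mvars {F : Multiset (Clause D)} {v : V} (hv : v ∈ mvars F) :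
    (D v).Nonempty := by
  obtain ⟨C, -, hvC⟩ := mem_mvars.mp hv
  exact FinFn.domain_nonempty_of_mem_vars hvC

lemma touchedBy_add_eq_right {G R : Multiset (Clause D)} {W : Finset V}
    (hG : Disjoint (mvars G) W) (hR : ∀ C ∈ R, (C.vars ∩ W).Nonempty) :
    touchedBy (G + R) W = R := by
  have untouched : ∀ C ∈ G, ¬ (C.vars ∩ W).Nonempty := by
    rintro C hC ⟨v, hv⟩
    rw [Finset.mem_inter] at hv
    exact Finset.disjoint_left.mp hG (mem_mvars.mpr ⟨C, hC, hv.1⟩) hv.2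
  rw [touchedBy, Multiset.filter_add, Multiset.filter_eq_nil.mpr untouched,
    Multiset.filter_eq_self.mpr hR, zero_add]

/-- The nodes of the clause–variable graph that are copies `(v, k)`, `k < |D v| - 1`, of the
variables `v ∈ W`. -/
def copies (D : V → Finset α) (W : Finset V) : Finset (V × ℕ) :=
  (W.sigma fun v => Finset.range ((D v).card - 1)).map (Equiv.sigmaEquivProd V ℕ).toEmbedding

omit [DecidableEq V] [DecidableEq α] in
lemma mem_copies {W : Finset V} {x : V × ℕ} :
    x ∈ copies D W ↔ x.1 ∈ W ∧ x.2 < (D x.1).card - 1 := by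
  simp [copies, Finset.mem_map_equiv]

omit [DecidableEq V] [DecidableEq α] in
lemma copies_mono {W W' : Finset V} (h : W ⊆ W') : copies D W ⊆ copies D W' :=
  Finset.map_subset_map.mpr (Finset.sigma_mono h fun _ => subset_rfl)

omit [DecidableEq V] [DecidableEq α] in
lemma card_copies {W : Finset V} (hW : ∀ v ∈ W, (D v).Nonempty) :
    ((copies D W).card : ℤ) = ∑ v ∈ W, ((D v).card - 1 : ℤ) := by
  simp only [copies, Finset.card_map, Finset.card_sigma, Finset.card_range, Nat.cast_sum]
  exact Finset.sum_congr rfl fun v hv => Nat.cast_pred (hW v hv).card_pos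

lemma delta_add (G H : Multiset (Clause D)) :
    delta (G + H) = delta G + H.card - (copies D (mvars H \ mvars G)).card := by
  have hcard := card_copies (D := D) (W := mvars H \ mvars G) fun v hv =>
    domain_nonempty_of_mem_mvars (Finset.mem_sdiff.mp hv).1
  rw [hcard, delta, delta, mvars_add, ← Finset.union_sdiff_self_eq_union,
    Finset.sum_union Finset.disjoint_sdiff, Multiset.card_add, Nat.cast_add]
  ring

lemma delta_add_le_iff {G H : Multiset (Clause D)} :
    delta (G + H) ≤ delta G ↔ H.card ≤ (copies D (mvars H \ mvars G)).card := by
  rw [delta_add]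
  omega

lemma delta_le_deltaStar {F G : Multiset (Clause D)} (h : G ≤ F) : delta G ≤ deltaStar F :=
  Finset.le_sup' delta (by simpa using h)

lemma exists_tight (F : Multiset (Clause D)) : ∃ G, Tight F G := by
  obtain ⟨G, hG, hδ⟩ := Finset.exists_mem_eq_sup' (powerset_toFinset_nonempty F) delta
  exact ⟨G, by simpa using hG, hδ.symm⟩

lemma tight_self_of_forall_tight_eq {F : Multiset (Clause D)} (h : ∀ F', Tight F F' → F' = F) :
    Tight F F := by
  obtain ⟨G, hG⟩ := exists_tight F
  exact h G hG ▸ hG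

lemma forall_tight_eq_iff_forall_delta_lt {F : Multiset (Clause D)} :
    (∀ F', Tight F F' → F' = F) ↔ ∀ F' < F, delta F' < delta F := by
  constructor
  · intro h F' hlt
    rw [(tight_self_of_forall_tight_eq h).2]
    exact (delta_le_deltaStar hlt.le).lt_of_ne fun hδ => hlt.ne (h F' ⟨hlt.le, hδ⟩)
  · intro h F' hF'
    by_contra hne
    have hlt : delta F' < delta F := h F' (hF'.1.lt_of_ne hne)
    exact (hlt.trans_le (delta_le_deltaStar le_rfl)).ne hF'.2

lemma forall_tight_eq_iff_forall_deltaStar_sub_lt {F : Multiset (Clause D)} :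
    (∀ F', Tight F F' → F' = F) ↔ ∀ C ∈ F, deltaStar (F - {C}) < deltaStar F := by
  simp only [Multiset.sub_singleton]
  constructor
  · intro h C hC
    obtain ⟨G, hGC, hG⟩ := exists_tight (F.erase C)
    have hGF : G < F := hGC.trans_lt (Multiset.erase_lt.mpr hC)
    rw [← hG]
    exact (delta_le_deltaStar hGF.le).lt_of_ne fun hδ => hGF.ne (h G ⟨hGF.le, hδ⟩)
  · intro h F' hF'
    by_contra hne
    obtain ⟨C, hCF'⟩ := Multiset.lt_iff_cons_le.mp (hF'.1.lt_of_ne hne)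
    have hC : C ∈ F := Multiset.mem_of_le hCF' (Multiset.mem_cons_self C F')
    have hle : F' ≤ F.erase C := by
      simpa only [Multiset.erase_cons_head] using Multiset.erase_le_erase C hCF'
    exact ((delta_le_deltaStar hle).trans_lt (h C hC)).ne hF'.2

section Matching

/-- `P` is a matching of the clause–variable graph covering every clause-occurrence of `R` and
using no copy of a variable in `U`, encoded as in `MatchingSat`. -/
structure IsMatchingOutside (U : Finset V) (R : Multiset (Clause D))
    (P : Multiset (Clause D × (V × ℕ))) : Prop where
  map_fst : P.map Prod.fst = R
  nodup_map_snd : (P.map Prod.snd).Nodup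
  snd_mem_copies : ∀ p ∈ P, p.2 ∈ copies D (p.1.vars \ U)

variable {U : Finset V} {R : Multiset (Clause D)} {P : Multiset (Clause D × (V × ℕ))}

omit [DecidableEq α] in
lemma IsMatchingOutside.fst_mem (h : IsMatchingOutside U R P) {p : Clause D × (V × ℕ)}
    (hp : p ∈ P) : p.1 ∈ R :=
  h.map_fst ▸ Multiset.mem_map_of_mem _ hp

lemma IsMatchingOutside.snd_mem_copies_mvars (h : IsMatchingOutside U R P)
    {p : Clause D × (V × ℕ)} (hp : p ∈ P) : p.2 ∈ copies D (mvars R \ U) := by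
  have hvars : p.1.vars ⊆ mvars R := fun v hv => mem_mvars.mpr ⟨p.1, h.fst_mem hp, hv⟩
  exact copies_mono (Finset.sdiff_subset_sdiff hvars subset_rfl) (h.snd_mem_copies p hp)

lemma IsMatchingOutside.card_le_card_copies (h : IsMatchingOutside U R P) :
    R.card ≤ (copies D (mvars R \ U)).card := by
  have hcard : (Finset.mk _ h.nodup_map_snd).card = R.card := by
    rw [Finset.card_mk, Multiset.card_map, ← h.map_fst, Multiset.card_map]
  rw [← hcard]
  refine Finset.card_le_card fun x hx => ?_
  obtain ⟨p, hp, rfl⟩ := Multiset.mem_map.mp (Finset.mem_mk.mp hx)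
  exact h.snd_mem_copies_mvars hp

lemma biUnion_copies_vars_sdiff (s : Finset R.ToType) :
    s.biUnion (fun i => copies D (FinFn.vars i.1 \ U)) =
      copies D (mvars (s.val.map fun i => i.1) \ U) := by
  ext x
  simp only [Finset.mem_biUnion, mem_copies, Finset.mem_sdiff, mem_mvars, Multiset.mem_map,
    Finset.mem_val]
  grind

lemma exists_isMatchingOutside_of_forall_card_le
    (hall : ∀ H ≤ R, H.card ≤ (copies D (mvars H \ U)).card) :
    ∃ P, IsMatchingOutside U R P := by
  obtain ⟨f, hf_inj, hf⟩ : ∃ f : R.ToType → V × ℕ, Function.Injective f ∧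
      ∀ i, f i ∈ copies D (FinFn.vars i.1 \ U) := by
    refine (Finset.all_card_le_biUnion_card_iff_exists_injective _).mp fun s => ?_
    have hle : s.val.map (fun i => i.1) ≤ R := by
      conv_rhs => rw [← Multiset.map_univ_coe R]
      exact Multiset.map_le_map (Finset.val_le_iff.mpr s.subset_univ)
    simpa only [biUnion_copies_vars_sdiff, Multiset.card_map, Finset.card_val] using hall _ hle
  refine ⟨(Finset.univ : Finset R.ToType).val.map fun i => (i.1, f i), ?_, ?_, ?_⟩
  · rw [Multiset.map_map]
    exact Multiset.map_univ_coe R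
  · rw [Multiset.map_map]
    exact Finset.univ.nodup.map hf_inj
  · intro p hp
    obtain ⟨i, -, rfl⟩ := Multiset.mem_map.mp hp
    exact hf i

omit [DecidableEq α] in
/-- The matching uses at most `|D v| - 1` copies of `v`, hence rules out at most that many
values. -/
lemma IsMatchingOutside.exists_value_unblocked (h : IsMatchingOutside U R P) {v : V}
    (hv : (D v).Nonempty) : ∃ ε ∈ D v, ∀ p ∈ P, p.2.1 = v → (v, ε) ∉ p.1.1 := by
  by_contra! blocked
  have hle : (D v).card ≤ (Finset.range ((D v).card - 1)).card := by
    refine Finset.card_le_card_of_forall_subsingleton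
      (fun ε k => ∃ p ∈ P, p.2 = (v, k) ∧ (v, ε) ∈ p.1.1) (fun ε hε => ?_) ?_
    · obtain ⟨p, hp, rfl, hpε⟩ := blocked ε hε
      exact ⟨p.2.2, Finset.mem_range.mpr (mem_copies.mp (h.snd_mem_copies p hp)).2,
        p, hp, rfl, hpε⟩
    · rintro k - ε ⟨-, p, hp, hpk, hpε⟩ ε' ⟨-, q, hq, hqk, hqε'⟩
      obtain rfl : p = q :=
        Multiset.inj_on_of_nodup_map h.nodup_map_snd p hp q hq (hpk.trans hqk.symm)
      exact congrArg Prod.snd (p.1.2.2 _ hpε _ hqε' rfl)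
  rw [Finset.card_range] at hle
  have := hv.card_pos
  omega

lemma IsMatchingOutside.exists_edgeSat (h : IsMatchingOutside U R P) :
    ∃ φ : PAssign D, φ.vars = mvars R \ U ∧ ∀ p ∈ P, EdgeSat φ p.1 p.2.1 := by
  have unblocked : ∀ v : ↥(mvars R \ U), ∃ ε ∈ D v, ∀ p ∈ P, p.2.1 = v → (v.1, ε) ∉ p.1.1 :=
    fun v => h.exists_value_unblocked
      (domain_nonempty_of_mem_mvars (Finset.mem_sdiff.mp v.2).1)
  choose e he unblocked using unblocked
  refine ⟨FinFn.ofFun _ e he, FinFn.vars_ofFun he, fun p hp => ?_⟩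
  have hpW : p.2.1 ∈ mvars R \ U := (mem_copies.mp (h.snd_mem_copies_mvars hp)).1
  have hpv : p.2.1 ∈ p.1.vars :=
    (Finset.mem_sdiff.mp (mem_copies.mp (h.snd_mem_copies p hp)).1).1
  obtain ⟨ε, hε⟩ := FinFn.mem_vars.mp hpv
  refine ⟨ε, hε, e ⟨_, hpW⟩, FinFn.mem_ofFun he ⟨_, hpW⟩, ?_⟩
  rintro rfl
  exact unblocked ⟨_, hpW⟩ p hp rfl hε

end Matching

lemma IsMatchingOutside.not_matchingLean {G R : Multiset (Clause D)}
    {P : Multiset (Clause D × (V × ℕ))} (h : IsMatchingOutside (mvars G) R P) (hR : R ≠ 0) :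
    ¬ MatchingLean (G + R) := by
  obtain ⟨φ, hφ, hsat⟩ := h.exists_edgeSat
  have touched : ∀ C ∈ R, (C.vars ∩ φ.vars).Nonempty := by
    intro C hC
    obtain ⟨p, hp, rfl⟩ := Multiset.mem_map.mp (h.map_fst ▸ hC)
    obtain ⟨ε, hε, ε', hε', -⟩ := hsat p hp
    exact ⟨p.2.1, Finset.mem_inter.mpr
      ⟨FinFn.mem_vars.mpr ⟨ε, hε⟩, FinFn.mem_vars.mpr ⟨ε', hε'⟩⟩⟩
  have touchedBy_eq : touchedBy (G + R) φ.vars = R :=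
    touchedBy_add_eq_right (hφ ▸ Finset.disjoint_sdiff) touched
  have autarky : IsMatchingAutarky φ (G + R) := by
    rw [IsMatchingAutarky, touchedBy_eq]
    exact ⟨P, h.map_fst, h.nodup_map_snd, fun p hp =>
      ⟨(mem_copies.mp (h.snd_mem_copies p hp)).2, hsat p hp⟩⟩
  obtain ⟨C, hC⟩ := Multiset.exists_mem_of_ne_zero hR
  obtain ⟨v, hv⟩ := touched C hC
  rw [Finset.mem_inter] at hv
  exact fun lean => lean ⟨φ, autarky, v, Finset.mem_inter.mpr
    ⟨hv.2, mem_mvars.mpr ⟨C, Multiset.mem_add.mpr (Or.inr hC), hv.1⟩⟩⟩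

lemma IsMatchingAutarky.exists_isMatchingOutside {φ : PAssign D} {F : Multiset (Clause D)}
    (h : IsMatchingAutarky φ F) :
    ∃ P, IsMatchingOutside (mvars (F.filter fun C => ¬ (C.vars ∩ φ.vars).Nonempty))
      (touchedBy F φ.vars) P := by
  obtain ⟨P, map_fst, nodup, hP⟩ := h
  refine ⟨P, map_fst, nodup, fun p hp => ?_⟩
  obtain ⟨hk, ε, hε, ε', hε', -⟩ := hP p hp
  refine mem_copies.mpr ⟨Finset.mem_sdiff.mpr ⟨FinFn.mem_vars.mpr ⟨ε, hε⟩, fun hmem => ?_⟩, hk⟩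
  obtain ⟨C, hC, hpC⟩ := mem_mvars.mp hmem
  exact (Multiset.mem_filter.mp hC).2
    ⟨p.2.1, Finset.mem_inter.mpr ⟨hpC, FinFn.mem_vars.mpr ⟨ε', hε'⟩⟩⟩

lemma not_matchingLean_iff_exists_isMatchingOutside {F : Multiset (Clause D)} :
    ¬ MatchingLean F ↔
      ∃ G R, G + R = F ∧ R ≠ 0 ∧ ∃ P, IsMatchingOutside (mvars G) R P := by
  constructor
  · intro not_lean
    obtain ⟨φ, autarky, v, hv⟩ := not_not.mp not_lean
    rw [Finset.mem_inter, mem_mvars] at hv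
    obtain ⟨hvφ, C, hC, hvC⟩ := hv
    have touched : C ∈ touchedBy F φ.vars :=
      Multiset.mem_filter.mpr ⟨hC, v, Finset.mem_inter.mpr ⟨hvC, hvφ⟩⟩
    refine ⟨_, _, ?_, fun hzero => ?_, autarky.exists_isMatchingOutside⟩
    · rw [add_comm]
      exact Multiset.filter_add_not _ F
    · exact Multiset.notMem_zero C (hzero ▸ touched)
  · rintro ⟨G, R, rfl, hR, P, hP⟩
    exact hP.not_matchingLean hR

theorem matchingLean_iff_forall_tight_eq {F : Multiset (Clause D)} :
    MatchingLean F ↔ ∀ F', Tight F F' → F' = F := by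
  constructor
  · intro lean F' hF'
    by_contra hne
    obtain ⟨R, rfl⟩ := Multiset.le_iff_exists_add.mp hF'.1
    have hR : R ≠ 0 := fun hzero => hne (by rw [hzero, add_zero])
    have hall : ∀ H ≤ R, H.card ≤ (copies D (mvars H \ mvars F')).card := fun H hH =>
      delta_add_le_iff.mp (hF'.2 ▸ delta_le_deltaStar (add_le_add_right hH F'))
    exact not_matchingLean_iff_exists_isMatchingOutside.mpr
      ⟨F', R, rfl, hR, exists_isMatchingOutside_of_forall_card_le hall⟩ lean
  · intro h
    by_contra not_lean
    obtain ⟨G, R, rfl, hR, P, hP⟩ := not_matchingLean_iff_exists_isMatchingOutside.mp not_lean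
    have hlt : G < G + R := lt_add_of_pos_right G (pos_iff_ne_zero.mpr hR)
    have hle : delta (G + R) ≤ delta G := delta_add_le_iff.mpr hP.card_le_card_copies
    exact hle.not_gt (forall_tight_eq_iff_forall_delta_lt.mp h G hlt)

/-- characterisations of matching lean multi-clause-sets:
(i) matching lean ↔ (ii) removing any clause-occurrence strictly decreases `δ*`
↔ (iii) every proper sub-multiset has strictly smaller deficiency ↔ (iv) `F` is
the unique tight sub-multiset of itself. -/
theorem matchingLean_tfae
    (hD : ∀ v, (D v).Nonempty) (F : Multiset (Clause D)) :
    (MatchingLean F ↔ ∀ C ∈ F, deltaStar (F - {C}) < deltaStar F) ∧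
    (MatchingLean F ↔ ∀ F' < F, delta F' < delta F) ∧
    (MatchingLean F ↔ (Tight F F ∧ ∀ F', Tight F F' → F' = F)) := by
  have lean_iff : MatchingLean F ↔ ∀ F', Tight F F' → F' = F := matchingLean_iff_forall_tight_eq
  exact ⟨lean_iff.trans forall_tight_eq_iff_forall_deltaStar_sub_lt,
    lean_iff.trans forall_tight_eq_iff_forall_delta_lt,
    lean_iff.trans (iff_and_self.mpr tight_self_of_forall_tight_eq)⟩

end GCLS
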